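/- Assume hypotheses (H): b ≠ 0, b'' ≠ 0, |a'| + |a''| > 0, |a''| + |b''| > 0, |a'| + |b'| + |c'| > 0, a = 1, a'·b = b', a''·b = b'', b''·c = b·c'', and b'' = b·(b·c' − b'·c); set q = c + b·b'/b''. If −2 < q ≤ −√3, then the system has cycles of all possible periods: for every positive integer p there exists an initial point (x₀, y₀) with x₀ + b·y₀ + c > 0 such that the orbit (x_n, y_n) of the system is well-defined (all denominators a''·x_n + b''·y_n + c'' are nonzero) and periodic with minimal period exactly p. -/

import Mathlib

/-- The reduced one-dimensional map. -/
noncomputable def redF (q u : ℝ) : ℝ := u + 1 / u + q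

/-- Left inverse branch. -/
noncomputable def redG (q y : ℝ) : ℝ := ((y - q) - Real.sqrt ((y - q) ^ 2 - 4)) / 2

/-- Right inverse branch. -/
noncomputable def redH (q y : ℝ) : ℝ := ((y - q) + Real.sqrt ((y - q) ^ 2 - 4)) / 2

theorem redF_pos {q u : ℝ} (hq : -2 < q) (hu : 0 < u) : 2 + q ≤ redF q u := by
  have : 2 ≤ u + 1 / u := by
    rw [← sub_nonneg]
    have : u + 1 / u - 2 = (u - 1) ^ 2 / u := by field_simp; ring
    rw [this]; positivity
  unfold redF; linarith

theorem redF_sub {q u v : ℝ} (hu : 0 < u) (hv : 0 < v) :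
    redF q v - redF q u = (v - u) * (u * v - 1) / (u * v) := by
  unfold redF; field_simp; ring

theorem redF_anti {q u v : ℝ} (hu : 0 < u) (huv : u < v) (hv : v ≤ 1) :
    redF q v < redF q u := by
  have hv0 : 0 < v := hu.trans huv
  have h := redF_sub (q := q) hu hv0
  have h1 : (v - u) * (u * v - 1) / (u * v) < 0 := by
    apply div_neg_of_neg_of_pos _ (by positivity)
    apply mul_neg_of_pos_of_neg <;> nlinarith
  linarith

theorem redF_mono {q u v : ℝ} (hu : 1 ≤ u) (huv : u < v) :
    redF q u < redF q v := by
  have h := redF_sub (q := q) (by linarith : 0 < u) (by linarith : 0 < v)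
  have h1 : 0 < (v - u) * (u * v - 1) / (u * v) := by
    have : 0 < u * v := by nlinarith
    apply div_pos _ this
    apply mul_pos <;> nlinarith
  linarith

theorem redG_spec {q y : ℝ} (hy : 2 + q ≤ y) :
    0 < redG q y ∧ redG q y ≤ 1 ∧ redF q (redG q y) = y := by
  have hs : 0 ≤ (y - q) ^ 2 - 4 := by nlinarith
  have h0 := Real.sqrt_nonneg ((y - q) ^ 2 - 4)
  have h1 := Real.sq_sqrt hs
  unfold redF redG
  set s := Real.sqrt ((y - q) ^ 2 - 4)
  have hpos : 0 < (y - q) - s := by nlinarith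
  refine ⟨by linarith, by nlinarith, ?_⟩
  field_simp
  nlinarith

theorem redH_spec {q y : ℝ} (hy : 2 + q ≤ y) :
    1 ≤ redH q y ∧ redF q (redH q y) = y := by
  have hs : 0 ≤ (y - q) ^ 2 - 4 := by nlinarith
  have h0 := Real.sqrt_nonneg ((y - q) ^ 2 - 4)
  have h1 := Real.sq_sqrt hs
  unfold redF redH
  set s := Real.sqrt ((y - q) ^ 2 - 4)
  have hpos : 0 < (y - q) + s := by linarith
  refine ⟨by linarith, ?_⟩
  field_simp
  nlinarith

theorem redG_cont (q : ℝ) : Continuous (redG q) := by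
  unfold redG; fun_prop

theorem redH_cont (q : ℝ) : Continuous (redH q) := by
  unfold redH; fun_prop

/-- A cycle of length three, found from an explicit cubic. -/
theorem exists_three {q : ℝ} (hq1 : -2 < q) (hq2 : q ≤ -Real.sqrt 3) :
    ∃ v w z : ℝ, 0 < w ∧ w < v ∧ v < z ∧ redF q v = w ∧ redF q w = z ∧ redF q z = v := by
  have h3 := Real.sq_sqrt (show (0:ℝ) ≤ 3 by norm_num)
  have h30 := Real.sqrt_nonneg 3
  have hs : 0 ≤ q ^ 2 - 3 := by nlinarith
  have hr0 := Real.sqrt_nonneg (q ^ 2 - 3)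
  have hr := Real.sq_sqrt hs
  obtain ⟨t, ht⟩ : ∃ t, t = -q + Real.sqrt (q ^ 2 - 3) := ⟨_, rfl⟩
  have hq1' : q < -1 := by nlinarith
  have ht1 : 1 < t := by linarith
  have htq : t ^ 2 + 2 * q * t + 3 = 0 := by rw [ht]; linear_combination hr
  have ht0 : t ≠ 0 := by linarith
  have hqt : q = -(t ^ 2 + 3) / (2 * t) := by field_simp; linear_combination htq
  clear ht
  let P : ℝ → ℝ := fun v => 6 * t * v ^ 3 - 9 * (t ^ 2 + 1) * v ^ 2 + 3 * t * (t ^ 2 + 3) * v - 2 * t ^ 2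
  have hP : ContinuousOn P (Set.Icc (t / 2) (2 * t / 3)) := by
    apply Continuous.continuousOn; fun_prop
  obtain ⟨v, ⟨hv1, hv2⟩, hv⟩ : (0:ℝ) ∈ P '' Set.Icc (t / 2) (2 * t / 3) := by
    apply intermediate_value_Icc' (by linarith) hP
    constructor
    · have : P (2 * t / 3) = - (2 / 9) * t ^ 4 := by simp only [P]; ring
      rw [this]; nlinarith [sq_nonneg (t ^ 2)]
    · have : P (t / 2) = t ^ 2 / 4 := by simp only [P]; ring
      rw [this]; positivity
  simp only [P] at hv
  have hv0 : 0 < v := by linarith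
  have hw0 : 0 < redF q v := by have := redF_pos hq1 hv0; linarith
  have hz : redF q (redF q v) = 3 * (t ^ 2 + 1) / (2 * t) - v - redF q v := by
    have key : redF q v * (3 * (t ^ 2 + 1) / (2 * t) - v - redF q v)
        = redF q v ^ 2 + 1 + q * redF q v := by
      unfold redF; rw [hqt]; field_simp
      linear_combination (2 * (-3 * t * v + 6)) / 3 * hv
    have : redF q (redF q v) = (redF q v ^ 2 + 1 + q * redF q v) / redF q v := by
      conv_lhs => unfold redF
      rw [show v + 1 / v + q = redF q v from rfl]
      field_simp
    rw [this, ← key]; field_simp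
  have hwv : redF q v < v := by
    have : 1 / v < -q := by
      rw [div_lt_iff₀ hv0]; nlinarith
    unfold redF; linarith
  have hvz : v < redF q (redF q v) := by
    rw [hz]
    have hneg : 3 * v ^ 2 - (2 * t + 3 / t) * v + 1 < 0 := by
      have h1 : (v - t / 2) * (v - 2 * t / 3) ≤ 0 :=
        mul_nonpos_of_nonneg_of_nonpos (by linarith) (by linarith)
      have h2 : 3 / t * v ≥ 3 / 2 := by
        rw [ge_iff_le, div_mul_eq_mul_div, le_div_iff₀ (by linarith)]; linarith
      nlinarith
    have : 3 * (t ^ 2 + 1) / (2 * t) - v - redF q v - v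
        = - (3 * v ^ 2 - (2 * t + 3 / t) * v + 1) / v := by
      unfold redF; rw [hqt]; field_simp; ring
    have h5 : 0 < - (3 * v ^ 2 - (2 * t + 3 / t) * v + 1) / v := div_pos (by linarith) hv0
    linarith
  refine ⟨v, redF q v, redF q (redF q v), hw0, hwv, hvz, rfl, rfl, ?_⟩
  have hz0 : 0 < redF q (redF q v) := by linarith
  have key : redF q (redF q v) ^ 2 + 1 + q * redF q (redF q v) = v * redF q (redF q v) := by
    rw [hz]; unfold redF; rw [hqt]; field_simp
    linear_combination (2 * (6 * t * v - 3)) / 3 * hv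
  generalize redF q (redF q v) = z at *
  unfold redF; field_simp; linear_combination key

theorem exists_cycle {q : ℝ} (hq1 : -2 < q) (hq2 : q ≤ -Real.sqrt 3) (p : ℕ) (hp : 0 < p) :
    ∃ x : ℝ, 0 < x ∧ (redF q)^[p] x = x ∧ ∀ m, 0 < m → m < p → (redF q)^[m] x ≠ x := by
  obtain ⟨v, w, z, hw0, hwv, hvz, hv, hw, hz⟩ := exists_three hq1 hq2
  have hw2 : 2 + q ≤ w := by rw [← hv]; exact redF_pos hq1 (by linarith)
  have hw1 : w ≤ 1 := by
    by_contra h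
    have := redF_mono (q := q) (by linarith : 1 ≤ w) hwv
    linarith
  have hz1 : 1 ≤ z := by
    by_contra h
    have := redF_anti (q := q) (by linarith : 0 < v) hvz (by linarith)
    linarith
  have hG : ∀ y ∈ Set.Icc w z, redG q y ∈ Set.Icc w v := by
    rintro y ⟨hy1, hy2⟩
    obtain ⟨g0, g1, g2⟩ := redG_spec (hw2.trans hy1)
    constructor
    · by_contra h
      have := redF_anti (q := q) g0 (not_le.1 h) hw1
      linarith
    · by_contra h
      have := redF_anti (q := q) (by linarith) (not_le.1 h) g1
      linarith
  have hH : ∀ y ∈ Set.Icc w v, redH q y ∈ Set.Icc v z := by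
    rintro y ⟨hy1, hy2⟩
    obtain ⟨g1, g2⟩ := redH_spec (hw2.trans hy1)
    constructor
    · by_contra h
      have := redF_mono (q := q) g1 (not_le.1 h)
      linarith
    · by_contra h
      have := redF_mono (q := q) hz1 (not_le.1 h)
      linarith
  have hGk : ∀ k, ∀ y ∈ Set.Icc w z, (redG q)^[k + 1] y ∈ Set.Icc w v := by
    intro k
    induction k with
    | zero => simpa using hG
    | succ k ih =>
      intro y hy
      rw [Function.iterate_succ_apply']
      have := ih y hy
      exact hG _ ⟨this.1, this.2.trans hvz.le⟩
  have hGz : ∀ k, ∀ y ∈ Set.Icc w z, (redG q)^[k] y ∈ Set.Icc w z := by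
    intro k y hy
    cases k with
    | zero => simpa using hy
    | succ k => exact ⟨(hGk k y hy).1, (hGk k y hy).2.trans hvz.le⟩
  have hFG : ∀ k j, ∀ y ∈ Set.Icc w z, (redF q)^[k] ((redG q)^[k + j] y) = (redG q)^[j] y := by
    intro k j y hy
    induction k with
    | zero => simp
    | succ k ih =>
      rw [Function.iterate_succ_apply, show k + 1 + j = (k + j) + 1 by ring,
        Function.iterate_succ_apply', (redG_spec (hw2.trans (hGz (k + j) y hy).1)).2.2, ih]
  obtain ⟨n, rfl⟩ : ∃ n, p = n + 1 := ⟨p - 1, by omega⟩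
  rcases Nat.eq_zero_or_pos n with rfl | hn
  · have hqn : q < 0 := by
      have := Real.sqrt_pos.2 (show (0:ℝ) < 3 by norm_num)
      linarith
    refine ⟨-1 / q, div_pos_of_neg_of_neg (by norm_num) hqn, ?_, fun m h1 h2 => by omega⟩
    simp only [zero_add, Function.iterate_one, redF]
    have := hqn.ne
    field_simp
    ring
  obtain ⟨k, rfl⟩ : ∃ k, n = k + 1 := ⟨n - 1, by omega⟩
  obtain ⟨x, hx, hfix⟩ := exists_mem_Icc_isFixedPt_of_mapsTo
    (f := fun x => redH q ((redG q)^[k + 1] x)) (a := v) (b := z)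
    ((redH_cont q).comp ((redG_cont q).iterate _)).continuousOn hvz.le
    (fun x hx => hH _ (hGk k x ⟨hwv.le.trans hx.1, hx.2⟩))
  have hfix' : redH q ((redG q)^[k + 1] x) = x := hfix
  have hxw : x ∈ Set.Icc w z := ⟨hwv.le.trans hx.1, hx.2⟩
  have hFx : redF q x = (redG q)^[k + 1] x := by
    conv_lhs => rw [← hfix']
    exact (redH_spec (hw2.trans (hGk k x hxw).1)).2
  refine ⟨x, by linarith [hx.1], ?_, ?_⟩
  · rw [Function.iterate_succ_apply, hFx]
    simpa using hFG (k + 1) 0 x hxw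
  · -- intermediate iterates lie in the left interval
    have hI : ∀ m, m < k + 1 → (redF q)^[m + 1] x ∈ Set.Icc w v := by
      intro m hm
      obtain ⟨j, hj⟩ : ∃ j, k + 1 = m + (j + 1) := ⟨k - m, by omega⟩
      rw [Function.iterate_succ_apply, hFx, hj, hFG m (j + 1) x hxw]
      exact hGk j x hxw
    intro m hm0 hm hmx
    obtain ⟨m, rfl⟩ : ∃ l, m = l + 1 := ⟨m - 1, by omega⟩
    have h1 := hI m (by omega)
    rw [hmx] at h1
    have hxv : x = v := le_antisymm h1.2 hx.1
    rcases Nat.eq_zero_or_pos k with rfl | hk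
    · have : m = 0 := by omega
      subst this
      simp only [zero_add, Function.iterate_one] at hmx
      rw [hxv] at hmx
      linarith
    · have h2 := (hI 1 (by omega)).2
      rw [hxv] at h2
      simp only [Function.iterate_succ_apply, Function.iterate_zero, id] at h2
      rw [hv, hw] at h2
      linarith


/-- Under hypotheses (H) with `−2 < q ≤ −√3`, the system has cycles of all
possible periods: for every positive integer `p` there is a well-defined orbit
with `x₀ + b·y₀ + c > 0` that is periodic with minimal period exactly `p`. -/
theorem stmt_12 (a b c a' b' c' a'' b'' c'' q : ℝ)
    (hb : b ≠ 0) (hb'' : b'' ≠ 0)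
    (hnt1 : |a'| + |a''| > 0) (hnt2 : |a''| + |b''| > 0)
    (hnt3 : |a'| + |b'| + |c'| > 0)
    (ha : a = 1) (h1 : a' * b = b') (h2 : a'' * b = b'') (h3 : b'' * c = b * c'')
    (h4 : b'' = b * (b * c' - b' * c))
    (hq : q = c + b * b' / b'') (hq1 : -2 < q) (hq2 : q ≤ -Real.sqrt 3) :
    ∀ p : ℕ, 0 < p →
      ∃ x y : ℕ → ℝ,
        x 0 + b * y 0 + c > 0 ∧
        (∀ n : ℕ, a'' * x n + b'' * y n + c'' ≠ 0) ∧
        (∀ n : ℕ, x (n + 1) = x n + b * y n + c) ∧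
        (∀ n : ℕ, y (n + 1) =
          (a' * x n + b' * y n + c') / (a'' * x n + b'' * y n + c'')) ∧
        (∀ n : ℕ, (x (n + p), y (n + p)) = (x n, y n)) ∧
        (∀ m : ℕ, 0 < m → (∀ n : ℕ, (x (n + m), y (n + m)) = (x n, y n)) →
          p ≤ m) := by
  intro p hp
  obtain ⟨u, hu0, hup, humin⟩ := exists_cycle hq1 hq2 p hp
  let U : ℕ → ℝ := fun n => (redF q)^[n] u
  have hUs : ∀ n, U (n + 1) = U n + 1 / U n + q := fun n => by
    simp only [U, Function.iterate_succ_apply']; rfl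
  have hUpos : ∀ n, 0 < U n := by
    intro n
    induction n with
    | zero => exact hu0
    | succ n ih =>
      have h := redF_pos hq1 ih
      have h2 := hUs n
      unfold redF at h
      linarith
  have hUp : ∀ n, U (n + p) = U n := fun n => by
    simp only [U, Function.iterate_add_apply, hup]
  have ha'' : a'' ≠ 0 := by rintro rfl; apply hb''; rw [← h2]; ring
  have hc'' : c'' = a'' * c := by
    apply mul_left_cancel₀ hb; rw [← h3, ← h2]; ring
  have hk : a'' = b * (c' - a' * c) := by
    apply mul_left_cancel₀ hb
    linear_combination h2 + h4 + b * c * h1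
  have hq' : q = c + b * a' / a'' := by
    rw [hq, ← h1, ← h2]; field_simp
  obtain ⟨r, rfl⟩ : ∃ r, p = r + 1 := ⟨p - 1, by omega⟩
  have hs : ∀ n, U (n + r) + b * ((U (n + r + 1) - U (n + r) - c) / b) + c = U (n + r + 1) :=
    fun n => by field_simp; ring
  have hden : ∀ n, a'' * U (n + r) + b'' * ((U (n + r + 1) - U (n + r) - c) / b) + c''
      = a'' * U (n + r + 1) := fun n => by
    rw [← h2, hc'']; linear_combination a'' * hs n
  have hnum : ∀ n, a' * U (n + r) + b' * ((U (n + r + 1) - U (n + r) - c) / b) + c'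
      = a' * U (n + r + 1) + (c' - a' * c) := fun n => by
    rw [← h1]; linear_combination a' * hs n
  refine ⟨fun n => U (n + r), fun n => (U (n + r + 1) - U (n + r) - c) / b,
    ?_, ?_, ?_, ?_, ?_, ?_⟩
  · have := hs 0
    simp only at this ⊢
    rw [this]; exact hUpos _
  · intro n
    simp only
    rw [hden]; exact mul_ne_zero ha'' (hUpos _).ne'
  · intro n
    simp only
    rw [hs]; congr 1; ring
  · intro n
    simp only
    rw [hden, hnum, show n + 1 + r = n + r + 1 by ring, hUs (n + r + 1), hq']
    have h := (hUpos (n + r + 1)).ne'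
    generalize U (n + r + 1) = X at *
    field_simp
    linear_combination hk
  · intro n
    simp only
    rw [show n + (r + 1) + r = n + r + (r + 1) by ring, hUp,
      show n + r + (r + 1) + 1 = (n + r + 1) + (r + 1) by ring, hUp]
  · intro m hm h
    by_contra hlt
    have h5 := (Prod.mk.inj (h 1)).1
    simp only at h5
    rw [show 1 + m + r = m + (r + 1) by ring, hUp, show 1 + r = 0 + (r + 1) by ring, hUp] at h5
    exact humin m hm (by omega) h5
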